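/- Let p be a prime with p ≡ 2 (mod 3), and let k, n be nonnegative integers such that p does not divide 3n+2. Then (p−1)·A_3(p^{2k}·n + (2p^{2k} − 2)/3) = (p^{2k+1} − 1)·A_3(n). (Here (2p^{2k} − 2)/3 is an integer since p² ≡ 1 (mod 3).) -/

import Mathlib

/-- The hook length of the cell `(i, j)` in a Young diagram `μ`:
arm length + leg length + 1. -/
def YoungDiagram.hookLength (μ : YoungDiagram) (i j : ℕ) : ℕ :=
  μ.rowLen i + μ.colLen j - i - j - 1

/-- A Young diagram (equivalently, a partition) is a 3-core if none of its
hook numbers is divisible by 3. -/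
def YoungDiagram.IsThreeCore (μ : YoungDiagram) : Prop :=
  ∀ c ∈ μ.cells, ¬ (3 ∣ μ.hookLength c.1 c.2)

/-- `a3 n` is the number of 3-core partitions of `n`. -/
noncomputable def a3 (n : ℕ) : ℕ :=
  Nat.card {μ : YoungDiagram // μ.card = n ∧ μ.IsThreeCore}

/-- `A3 n` is the number of partition pairs of `n` in which each partition is a 3-core. -/
noncomputable def A3 (n : ℕ) : ℕ :=
  Nat.card {p : YoungDiagram × YoungDiagram //
    p.1.card + p.2.card = n ∧ p.1.IsThreeCore ∧ p.2.IsThreeCore}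

/-- `B3 n` is the number of partition triples of `n` in which each partition is a 3-core. -/
noncomputable def B3 (n : ℕ) : ℕ :=
  Nat.card {p : YoungDiagram × YoungDiagram × YoungDiagram //
    p.1.card + p.2.1.card + p.2.2.card = n ∧
    p.1.IsThreeCore ∧ p.2.1.IsThreeCore ∧ p.2.2.IsThreeCore}

def bd (μ : YoungDiagram) (i : ℕ) : ℤ := (μ.rowLen i : ℤ) - i - 1

def InS (μ : YoungDiagram) (z : ℤ) : Prop := ∃ i : ℕ, bd μ i = z

theorem bd_lt (μ : YoungDiagram) {i j : ℕ} (h : (i, j) ∈ μ) :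
    bd μ i - ((j : ℤ) - μ.colLen j) = μ.hookLength i j ∧ 0 < μ.hookLength i j := by
  have h1 := YoungDiagram.mem_iff_lt_rowLen.1 h
  have h2 := YoungDiagram.mem_iff_lt_colLen.1 h
  unfold bd YoungDiagram.hookLength
  omega

theorem bd_gt (μ : YoungDiagram) {i j : ℕ} (h : (i, j) ∉ μ) :
    bd μ i < (j : ℤ) - μ.colLen j := by
  have h1 := mt YoungDiagram.mem_iff_lt_rowLen.2 h
  have h2 := mt YoungDiagram.mem_iff_lt_colLen.2 h
  unfold bd
  omega

theorem not_InS (μ : YoungDiagram) (j : ℕ) : ¬ InS μ ((j : ℤ) - μ.colLen j) := by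
  rintro ⟨i, hi⟩
  by_cases h : (i, j) ∈ μ
  · have := bd_lt μ h; omega
  · have := bd_gt μ h; omega

theorem rowLen_zero (μ : YoungDiagram) {i : ℕ} (h : μ.colLen 0 ≤ i) : μ.rowLen i = 0 := by
  by_contra hne
  have : (i, 0) ∈ μ := YoungDiagram.mem_iff_lt_rowLen.2 (by omega)
  have := YoungDiagram.mem_iff_lt_colLen.1 this
  omega

theorem InS_or (μ : YoungDiagram) (z : ℤ) : InS μ z ∨ ∃ j : ℕ, z = (j : ℤ) - μ.colLen j := by
  have hex : ∃ i : ℕ, bd μ i ≤ z := by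
    refine ⟨μ.colLen 0 + z.natAbs, ?_⟩
    have := rowLen_zero μ (i := μ.colLen 0 + z.natAbs) (by omega)
    unfold bd; omega
  classical
  have h1 := Nat.find_spec hex
  have h2 := fun m => @Nat.find_min _ _ hex m
  set i := Nat.find hex
  rcases h1.lt_or_eq with h | h
  · right
    refine ⟨(z + i).toNat, ?_⟩
    have hj : ((z + i).toNat : ℤ) = z + i := by unfold bd at h; omega
    set j := (z + i).toNat
    have ha : (i, j) ∉ μ := by
      rw [YoungDiagram.mem_iff_lt_rowLen]; unfold bd at h; omega
    rw [YoungDiagram.mem_iff_lt_colLen] at ha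
    have hb : i ≤ μ.colLen j := by
      rcases Nat.eq_zero_or_pos i with h0 | h0
      · omega
      · have h3 := h2 (i - 1) (by omega)
        have : (i - 1, j) ∈ μ := by
          rw [YoungDiagram.mem_iff_lt_rowLen]; unfold bd at h3; omega
        rw [YoungDiagram.mem_iff_lt_colLen] at this
        omega
    omega
  · left; exact ⟨i, h⟩

theorem core_iff (μ : YoungDiagram) : μ.IsThreeCore ↔ ∀ z, InS μ z → InS μ (z - 3) := by
  constructor
  · rintro h z ⟨i, hi⟩
    rcases InS_or μ (z - 3) with h1 | ⟨j, hj⟩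
    · exact h1
    · exfalso
      have hm : (i, j) ∈ μ := by
        by_contra hn
        have := bd_gt μ hn
        omega
      have h2 := h (i, j) hm
      have := bd_lt μ hm
      apply h2
      simp only
      omega
  · rintro h ⟨i, j⟩ hm hd
    have h1 := bd_lt μ ((YoungDiagram.mem_cells _).1 hm)
    obtain ⟨k, hk⟩ := hd
    simp only at hk
    have h2 : ∀ k : ℕ, InS μ (bd μ i - 3 * k) := by
      intro k
      induction k with
      | zero => exact ⟨i, by simp⟩
      | succ k ih =>
        convert h _ ih using 1
        push_cast; ring
    apply not_InS μ j
    convert h2 k using 1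
    omega

theorem bd_anti (μ : YoungDiagram) : StrictAnti (bd μ) := by
  intro i j h
  have := μ.rowLen_anti i j h.le
  unfold bd; omega

theorem InS_inj {μ ν : YoungDiagram} (h : ∀ z, InS μ z ↔ InS ν z) : μ = ν := by
  have h1 : bd μ = bd ν := by
    have h2 : StrictMono (fun i => OrderDual.toDual (bd μ i)) := fun i j h => bd_anti μ h
    have h3 : StrictMono (fun i => OrderDual.toDual (bd ν i)) := fun i j h => bd_anti ν h
    have := (StrictMono.range_inj h2 h3).1 (by
      ext z; exact h (OrderDual.ofDual z))
    exact this
  ext ⟨i, j⟩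
  have := congrFun h1 i
  simp only [YoungDiagram.mem_cells, YoungDiagram.mem_iff_lt_rowLen]
  unfold bd at this
  omega

theorem exists_young (S : ℤ → Prop) (y : ℤ → ℤ) (hy0 : ∀ z, 0 ≤ y z) (hx0 : ∀ z, 0 ≤ z + y z)
    (anti : ∀ z z', z ≤ z' → y z' ≤ y z) (mono : ∀ z z', z ≤ z' → z + y z ≤ z' + y z')
    (K : ℕ) (hK : y K = 0) (hK' : y (-K) = K)
    (hS : ∀ z, S z → y (z + 1) = y z - 1) (hS' : ∀ z, ¬ S z → y (z + 1) = y z) :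
    ∃ μ : YoungDiagram, ∀ z, InS μ z ↔ S z := by
  let C : Set (ℕ × ℕ) := {c | ∃ z : ℤ, (c.1 : ℤ) < y z ∧ (c.2 : ℤ) < z + y z}
  have hC : C.Finite := by
    apply ((Set.finite_Iio K).prod (Set.finite_Iio K)).subset
    rintro ⟨i, j⟩ ⟨z, h1, h2⟩
    simp only at h1 h2
    simp only [Set.mem_prod, Set.mem_Iio]
    have hz1 : z < K := by
      by_contra h
      have := anti K z (by omega)
      omega
    have hz2 : -K < z := by
      by_contra h
      have := mono z (-K) (by omega)
      omega
    have := anti (-K) z hz2.le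
    have := mono z K hz1.le
    omega
  let μ : YoungDiagram := ⟨hC.toFinset, by
    rintro ⟨i, j⟩ ⟨i', j'⟩ hle h
    simp only [Set.Finite.coe_toFinset] at h ⊢
    obtain ⟨z, h1, h2⟩ := h
    have h3 : i' ≤ i := hle.1
    have h4 : j' ≤ j := hle.2
    refine ⟨z, ?_, ?_⟩ <;> simp only at * <;> omega⟩
  have hμ : ∀ i j : ℕ, (i, j) ∈ μ ↔ ∃ z : ℤ, (i : ℤ) < y z ∧ (j : ℤ) < z + y z := by
    intro i j
    rw [← YoungDiagram.mem_cells]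
    simp [μ, C]
  refine ⟨μ, fun z => ⟨?_, ?_⟩⟩
  · intro h
    by_contra hn
    have e := hS' z hn
    obtain ⟨j, hj⟩ : ∃ j : ℕ, (j : ℤ) = z + y z := ⟨(z + y z).toNat, Int.toNat_of_nonneg (hx0 z)⟩
    have hc : ∀ i : ℕ, i < μ.colLen j ↔ (i : ℤ) < y z := by
      intro i
      rw [← YoungDiagram.mem_iff_lt_colLen, hμ]
      constructor
      · rintro ⟨w, h1, h2⟩
        have : z + 1 ≤ w := by
          by_contra hlt
          have := mono w z (by omega)
          omega
        have := anti _ _ this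
        omega
      · intro h
        exact ⟨z + 1, by omega, by omega⟩
    apply not_InS μ j
    convert h
    have h1 := hc (y z).toNat
    have h2 := hc (μ.colLen j)
    have h3 := hy0 z
    omega
  · intro h
    have e := hS z h
    obtain ⟨i, hi⟩ : ∃ i : ℕ, (i : ℤ) = y (z + 1) := ⟨(y (z + 1)).toNat, Int.toNat_of_nonneg (hy0 _)⟩
    refine ⟨i, ?_⟩
    have hc : ∀ j : ℕ, j < μ.rowLen i ↔ (j : ℤ) < z + y z := by
      intro j
      rw [← YoungDiagram.mem_iff_lt_rowLen, hμ]
      constructor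
      · rintro ⟨w, h1, h2⟩
        have : w ≤ z := by
          by_contra hlt
          have := anti (z + 1) w (by omega)
          omega
        have := mono _ _ this
        omega
      · intro h
        exact ⟨z, by omega, by omega⟩
    have h1 := hc (z + y z).toNat
    have h2 := hc (μ.rowLen i)
    have h3 := hx0 z
    unfold bd
    omega

def S3 (a b c z : ℤ) : Prop := (z % 3 = 0 ∧ z / 3 < a) ∨ (z % 3 = 1 ∧ z / 3 < b) ∨ (z % 3 = 2 ∧ z / 3 < c)

theorem exists_S3 (a b c : ℤ) (h : a + b + c = 0) : ∃ μ : YoungDiagram, ∀ z, InS μ z ↔ S3 a b c z := by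
  apply exists_young (S3 a b c)
    (fun z => max 0 (a - (z + 2) / 3) + max 0 (b - (z + 1) / 3) + max 0 (c - z / 3))
    (K := 3 * (a.natAbs + b.natAbs + c.natAbs) + 5)
  · intro z; positivity
  · intro z; omega
  · intro z z' h; omega
  · intro z z' h; omega
  · omega
  · omega
  · intro z; unfold S3; omega
  · intro z; unfold S3; omega

theorem exists_thr (P : ℤ → Prop) (h1 : ∀ k, P k → P (k - 1)) (h2 : ∃ k, P k)
    (h3 : ∃ b, ∀ k, P k → k ≤ b) : ∃ n, ∀ k, P k ↔ k < n := by
  obtain ⟨ub, hub, hmax⟩ := Int.exists_greatest_of_bdd h3 h2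
  refine ⟨ub + 1, fun k => ⟨fun h => by have := hmax k h; omega, fun h => ?_⟩⟩
  have : ∀ d : ℕ, P (ub - d) := by
    intro d
    induction d with
    | zero => simpa using hub
    | succ d ih => convert h1 _ ih using 1; push_cast; ring
  convert this (ub - k).toNat using 1
  omega

theorem InS_le (μ : YoungDiagram) {z} (h : InS μ z) : z < μ.rowLen 0 := by
  obtain ⟨i, rfl⟩ := h
  have := μ.rowLen_anti 0 i (by omega)
  unfold bd; omega

theorem InS_neg (μ : YoungDiagram) {z : ℤ} (h : z < - μ.colLen 0) : InS μ z := by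
  refine ⟨(-z - 1).toNat, ?_⟩
  have := rowLen_zero μ (i := (-z - 1).toNat) (by omega)
  unfold bd; omega

theorem core_S3 (μ : YoungDiagram) (h : μ.IsThreeCore) : ∃ a b c, ∀ z, InS μ z ↔ S3 a b c z := by
  rw [core_iff] at h
  have hr : ∀ r : ℤ, ∃ n, ∀ k, InS μ (3 * k + r) ↔ k < n := by
    intro r
    apply exists_thr
    · intro k hk
      convert h _ hk using 1
      ring
    · exact ⟨- μ.colLen 0 - |r| - 1, InS_neg μ (by have := le_abs_self r; have := abs_nonneg r; omega)⟩
    · refine ⟨μ.rowLen 0 + |r|, fun k hk => ?_⟩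
      have := InS_le μ hk
      have := neg_abs_le r; have := abs_nonneg r; omega
  obtain ⟨a, ha⟩ := hr 0
  obtain ⟨b, hb⟩ := hr 1
  obtain ⟨c, hc⟩ := hr 2
  refine ⟨a, b, c, fun z => ?_⟩
  have e := Int.emod_add_mul_ediv z 3
  unfold S3
  rcases (by omega : z % 3 = 0 ∨ z % 3 = 1 ∨ z % 3 = 2) with h | h | h
  · rw [show z = 3 * (z / 3) + 0 by omega, ha]; omega
  · rw [show z = 3 * (z / 3) + 1 by omega, hb]; omega
  · rw [show z = 3 * (z / 3) + 2 by omega, hc]; omega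

theorem S3_core (μ : YoungDiagram) (a b c) (h : ∀ z, InS μ z ↔ S3 a b c z) : μ.IsThreeCore := by
  rw [core_iff]
  intro z
  rw [h, h]; unfold S3; omega

theorem card_rows (μ : YoungDiagram) (N : ℕ) (hN : μ.colLen 0 ≤ N) :
    μ.card = ∑ i ∈ Finset.range N, μ.rowLen i := by
  rw [YoungDiagram.card, Finset.card_eq_sum_card_fiberwise (f := Prod.fst) (t := Finset.range N)]
  · refine Finset.sum_congr rfl fun i _ => ?_
    rw [YoungDiagram.rowLen_eq_card, YoungDiagram.row]
  · rintro ⟨i, j⟩ h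
    have h : (i, j) ∈ μ := h
    have := YoungDiagram.mem_iff_lt_rowLen.1 h
    simp only [Finset.coe_range, Set.mem_Iio]
    by_contra hlt
    have := rowLen_zero μ (i := i) (by omega)
    omega

theorem S3_sum (μ : YoungDiagram) (a b c : ℤ) (h : ∀ z, InS μ z ↔ S3 a b c z) :
    a + b + c = 0 ∧ 2 * (μ.card : ℤ) = 3 * (a ^ 2 + b ^ 2 + c ^ 2) + 2 * b + 4 * c := by
  set M := μ.colLen 0 with hM
  have hlow : ∀ r : ℤ, 0 ≤ r → r ≤ 2 → S3 a b c (3 * (-M - 1) + r) := fun r h0 h2 =>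
    (h _).1 (InS_neg μ (by omega))
  obtain ⟨A, hA⟩ : ∃ A : ℕ, (A : ℤ) = a + M := ⟨(a + M).toNat, by
    have := hlow 0 (by omega) (by omega); unfold S3 at this; omega⟩
  obtain ⟨B, hB⟩ : ∃ A : ℕ, (A : ℤ) = b + M := ⟨(b + M).toNat, by
    have := hlow 1 (by omega) (by omega); unfold S3 at this; omega⟩
  obtain ⟨C, hC⟩ : ∃ A : ℕ, (A : ℤ) = c + M := ⟨(c + M).toNat, by
    have := hlow 2 (by omega) (by omega); unfold S3 at this; omega⟩
  let U : ℕ → ℤ → Finset ℤ := fun N r => (Finset.range N).image (fun j : ℕ => 3 * ((j : ℤ) - M) + r)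
  have hU : ∀ N r z, z ∈ U N r ↔ ∃ j : ℕ, j < N ∧ 3 * ((j : ℤ) - M) + r = z := by
    intro N r z; simp [U]
  have hF : (Finset.range (3 * M)).image (bd μ) = (U A 0 ∪ U B 1) ∪ U C 2 := by
    ext z
    have e1 : z ∈ (Finset.range (3 * M)).image (bd μ) ↔ -3 * (M : ℤ) ≤ z ∧ InS μ z := by
      simp only [Finset.mem_image, Finset.mem_range]
      constructor
      · rintro ⟨i, hi, rfl⟩
        exact ⟨by unfold bd; omega, i, rfl⟩
      · rintro ⟨h1, i, rfl⟩
        refine ⟨i, ?_, rfl⟩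
        by_contra hlt
        have := rowLen_zero μ (i := i) (by omega)
        unfold bd at h1
        omega
    rw [e1, h]
    simp only [Finset.mem_union, hU]
    constructor
    · rintro ⟨h1, h2 | h2 | h2⟩
      · left; left; exact ⟨(z / 3 + M).toNat, by omega, by omega⟩
      · left; right; exact ⟨(z / 3 + M).toNat, by omega, by omega⟩
      · right; exact ⟨(z / 3 + M).toNat, by omega, by omega⟩
    · unfold S3
      rintro ((⟨j, h1, h2⟩ | ⟨j, h1, h2⟩) | ⟨j, h1, h2⟩) <;> omega
  have hsum : ∀ f : ℤ → ℤ, ∑ i ∈ Finset.range (3 * M), f (bd μ i) =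
      ∑ j ∈ Finset.range A, f (3 * ((j : ℤ) - M) + 0) + ∑ j ∈ Finset.range B, f (3 * ((j : ℤ) - M) + 1)
      + ∑ j ∈ Finset.range C, f (3 * ((j : ℤ) - M) + 2) := by
    intro f
    rw [← Finset.sum_image (f := f) (s := Finset.range (3 * M)) (g := bd μ)
      (fun x _ y _ h => (bd_anti μ).injective h), hF, Finset.sum_union, Finset.sum_union]
    · simp only [U]
      rw [Finset.sum_image, Finset.sum_image, Finset.sum_image] <;>
      · intro x _ y _ h
        simp only at h
        omega
    · rw [Finset.disjoint_left]
      intro z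
      simp only [hU]
      rintro ⟨j, _, h1⟩ ⟨j', _, h2⟩
      omega
    · rw [Finset.disjoint_left]
      intro z
      simp only [Finset.mem_union, hU]
      rintro (⟨j, _, h1⟩ | ⟨j, _, h1⟩) ⟨j', _, h2⟩ <;> omega
  have s1 := hsum (fun _ => 1)
  simp at s1
  have hsum0 : a + b + c = 0 := by omega
  refine ⟨hsum0, ?_⟩
  have s2 := hsum id
  have ap : ∀ (N : ℕ) (r : ℤ), 2 * ∑ j ∈ Finset.range N, id (3 * ((j : ℤ) - M) + r) =
      3 * N * (N - 1) - 6 * M * N + 2 * r * N := by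
    intro N r
    induction N with
    | zero => simp
    | succ N ih => rw [Finset.sum_range_succ, mul_add, ih]; simp only [id]; push_cast; ring
  have bs : ∀ N : ℕ, 2 * ∑ i ∈ Finset.range N, id (bd μ i) =
      2 * ∑ i ∈ Finset.range N, (μ.rowLen i : ℤ) - N * (N + 1) := by
    intro N
    induction N with
    | zero => simp
    | succ N ih =>
      rw [Finset.sum_range_succ, Finset.sum_range_succ, mul_add, ih]; simp only [id, bd]; push_cast; ring
  have cr := card_rows μ (3 * M) (by omega)
  have cr' : (μ.card : ℤ) = ∑ i ∈ Finset.range (3 * M), (μ.rowLen i : ℤ) := by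
    rw [cr]; push_cast; rfl
  have b1 := bs (3 * M)
  rw [s2, ← cr', mul_add, mul_add, ap, ap, ap, hA, hB, hC] at b1
  push_cast at b1
  have : c = - a - b := by omega
  subst this
  linarith

section EisPart

open QuadraticAlgebra

abbrev Eis (R : Type) [CommRing R] := QuadraticAlgebra R (-1) (-1)

theorem eis_norm {R : Type} [CommRing R] (z : Eis R) :
    z.norm = z.re ^ 2 - z.re * z.im + z.im ^ 2 := by
  rw [norm_def]; ring

theorem eis_norm_nonneg (z : Eis ℤ) : 0 ≤ z.norm := by
  rw [eis_norm]; nlinarith [sq_nonneg (2 * z.re - z.im), sq_nonneg z.im]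

theorem eis_norm_eq_zero (z : Eis ℤ) (h : z.norm = 0) : z = 0 := by
  rw [eis_norm] at h
  have h1 : z.im = 0 := by
    have : z.im ^ 2 = 0 := by nlinarith [sq_nonneg (2 * z.re - z.im), sq_nonneg z.im]
    simpa using this
  have h2 : z.re = 0 := by simpa [h1] using h
  ext <;> simp [h1, h2]

theorem eis_round_aux (n x y : ℤ) (hy : 0 ≤ y) (hxy : y ≤ x) (hx : x ≤ n) :
    3 * (x ^ 2 - x * y + y ^ 2) ≤ n ^ 2 ∨
    3 * ((x - n) ^ 2 - (x - n) * y + y ^ 2) ≤ n ^ 2 ∨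
    3 * ((x - n) ^ 2 - (x - n) * (y - n) + (y - n) ^ 2) ≤ n ^ 2 := by
  obtain ⟨a, rfl⟩ : ∃ a, n = x + a := ⟨n - x, by ring⟩
  obtain ⟨b, rfl⟩ : ∃ b, x = y + b := ⟨x - y, by ring⟩
  have ha : 0 ≤ a := by linarith
  have hb : 0 ≤ b := by linarith
  -- weights: a at 0, b at n, y at n + n ω
  have key : ∀ u v w : ℤ, 0 ≤ u → 0 ≤ v → 0 ≤ w → v ≤ u → w ≤ u →
      3 * (v ^ 2 + v * w + w ^ 2) ≤ (u + v + w) ^ 2 := by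
    intro u v w hu hv hw h1 h2
    rcases le_total v w with h | h <;> nlinarith [mul_nonneg hv hw, mul_nonneg (sub_nonneg.2 h1) hv, mul_nonneg (sub_nonneg.2 h1) hw,
      mul_nonneg (sub_nonneg.2 h2) hv, mul_nonneg (sub_nonneg.2 h2) hw, mul_nonneg (sub_nonneg.2 h) hv, mul_nonneg (sub_nonneg.2 h) hw,
      mul_nonneg (sub_nonneg.2 h) hu, mul_nonneg (sub_nonneg.2 h1) hu, mul_nonneg (sub_nonneg.2 h2) hu]
  by_cases h1 : b ≤ a ∧ y ≤ a
  · left; have := key a b y ha hb hy h1.1 h1.2; nlinarith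
  by_cases h2 : a ≤ b ∧ y ≤ b
  · right; left; have := key b a y hb ha hy h2.1 h2.2; nlinarith
  · right; right
    have := key y a b hy ha hb (by omega) (by omega); nlinarith

theorem eis_round (n : ℤ) (hn : 0 < n) (z : Eis ℤ) :
    ∃ q : Eis ℤ, 3 * (z - n * q).norm ≤ n ^ 2 := by
  have hx := Int.emod_add_mul_ediv z.re n
  have hy := Int.emod_add_mul_ediv z.im n
  have hx0 := Int.emod_nonneg z.re hn.ne'
  have hy0 := Int.emod_nonneg z.im hn.ne'
  have hx1 := (Int.emod_lt_of_pos z.re hn).le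
  have hy1 := (Int.emod_lt_of_pos z.im hn).le
  set x := z.re % n
  set y := z.im % n
  have gen : ∀ i j : ℤ, 3 * ((x - n * i) ^ 2 - (x - n * i) * (y - n * j) + (y - n * j) ^ 2) ≤ n ^ 2 →
      ∃ q : Eis ℤ, 3 * (z - n * q).norm ≤ n ^ 2 := by
    intro i j h
    refine ⟨⟨z.re / n + i, z.im / n + j⟩, ?_⟩
    rw [eis_norm]
    have e1 : (z - n * (⟨z.re / n + i, z.im / n + j⟩ : Eis ℤ)).re = x - n * i := by
      simp [re_intCast, im_intCast]; linarith
    have e2 : (z - n * (⟨z.re / n + i, z.im / n + j⟩ : Eis ℤ)).im = y - n * j := by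
      simp [re_intCast, im_intCast]; linarith
    rw [e1, e2]; exact h
  rcases le_total y x with h | h
  · rcases eis_round_aux n x y hy0 h hx1 with h | h | h
    · exact gen 0 0 (by simpa using h)
    · exact gen 1 0 (by simpa using h)
    · exact gen 1 1 (by simpa using h)
  · rcases eis_round_aux n y x hx0 h hy1 with h | h | h
    · exact gen 0 0 (by linarith)
    · exact gen 0 1 (by linarith)
    · exact gen 1 1 (by linarith)

/-- norm on pairs -/
def pn (w : Eis ℤ × Eis ℤ) : ℤ := w.1.norm + w.2.norm

theorem pn_nonneg (w) : 0 ≤ pn w := add_nonneg (eis_norm_nonneg _) (eis_norm_nonneg _)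

theorem pn_eq_zero (w) (h : pn w = 0) : w = 0 := by
  have h1 := eis_norm_nonneg w.1
  have h2 := eis_norm_nonneg w.2
  unfold pn at h
  ext1
  · exact eis_norm_eq_zero _ (by linarith)
  · exact eis_norm_eq_zero _ (by linarith)

/-- quaternion-like multiplication `w * g` -/
def qm (w g : Eis ℤ × Eis ℤ) : Eis ℤ × Eis ℤ :=
  (w.1 * g.1 - w.2 * star g.2, w.1 * g.2 + w.2 * star g.1)

theorem pn_qm (w g) : pn (qm w g) = pn w * pn g := by
  unfold pn qm
  simp only [eis_norm, re_sub, im_sub, re_add, im_add, re_mul, im_mul, re_star, im_star]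
  ring

/-- Euclidean division -/
theorem qm_div (w g) (hg : 0 < pn g) : ∃ q, pn (w - qm q g) < pn g := by
  obtain ⟨x, hx⟩ := eis_round (pn g) hg (w.1 * star g.1 + w.2 * star g.2)
  obtain ⟨y, hy⟩ := eis_round (pn g) hg (w.2 * g.1 - w.1 * g.2)
  refine ⟨(x, y), ?_⟩
  have key : pn g * pn (w - qm (x, y) g) =
     (w.1 * star g.1 + w.2 * star g.2 - pn g * x).norm + (w.2 * g.1 - w.1 * g.2 - pn g * y).norm := by
    unfold pn qm
    simp only [eis_norm, re_sub, im_sub, re_add, im_add, re_mul, im_mul, re_star, im_star, Prod.fst_sub, Prod.snd_sub, re_intCast, im_intCast, Int.cast_id]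
    ring
  nlinarith

section P

variable (p : ℕ)

def red : Eis ℤ →+* Eis (ZMod p) where
  toFun z := ⟨z.re, z.im⟩
  map_one' := by ext <;> simp
  map_mul' x y := by ext <;> simp
  map_zero' := by ext <;> simp
  map_add' x y := by ext <;> simp

theorem red_star (z) : red p (star z) = star (red p z) := by
  ext <;> simp [red]

theorem red_norm (z) : (red p z).norm = ((z.norm : ℤ) : ZMod p) := by
  simp [red, eis_norm]

theorem red_eq_zero (z) : red p z = 0 ↔ ∃ y, z = p * y := by
  constructor
  · intro h
    have h1 : ((z.re : ℤ) : ZMod p) = 0 := congrArg QuadraticAlgebra.re h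
    have h2 : ((z.im : ℤ) : ZMod p) = 0 := congrArg QuadraticAlgebra.im h
    rw [ZMod.intCast_zmod_eq_zero_iff_dvd] at h1 h2
    obtain ⟨a, ha⟩ := h1
    obtain ⟨b, hb⟩ := h2
    refine ⟨⟨a, b⟩, ?_⟩
    ext <;> simp [re_natCast, im_natCast, ha, hb]
  · rintro ⟨y, rfl⟩
    rw [map_mul]
    have : red p (p : Eis ℤ) = 0 := by ext <;> simp [red, re_natCast, im_natCast]
    rw [this, zero_mul]

theorem red_surj [NeZero p] (t : Eis (ZMod p)) : ∃ z, red p z = t :=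
  ⟨⟨t.re.val, t.im.val⟩, by ext <;> simp [red]⟩

/-- the lattice `L_t` -/
def Lt (t : Eis (ZMod p)) (w : Eis ℤ × Eis ℤ) : Prop := red p w.1 = t * red p w.2

theorem Lt_sub {t w v} (h : Lt p t w) (h' : Lt p t v) : Lt p t (w - v) := by
  unfold Lt at *
  simp only [Prod.fst_sub, Prod.snd_sub, map_sub, h, h']; ring

theorem Lt_qm {t g} (ht : t.norm = -1) (h : Lt p t g) (w) : Lt p t (qm w g) := by
  unfold Lt at *
  have h1 : t * star t = -1 := by
    rw [← algebraMap_norm_eq_mul_star, ht]; simp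
  simp only [qm, map_sub, map_add, map_mul, red_star, h, star_mul]
  linear_combination (- red p w.2 * star (red p g.2)) * h1

theorem Lt_dvd {t w} (ht : t.norm = -1) (h : Lt p t w) : (p : ℤ) ∣ pn w := by
  rw [← ZMod.intCast_zmod_eq_zero_iff_dvd]
  unfold pn
  push_cast
  rw [← red_norm, ← red_norm, h, map_mul, ht]; ring

theorem exists_gen (hp : p.Prime) (t : Eis (ZMod p)) (ht : t.norm = -1) :
    ∃ g, pn g = p ∧ Lt p t g ∧ ∀ w, Lt p t w → ∃ q, w = qm q g := by
  haveI : NeZero p := ⟨hp.ne_zero⟩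
  have hp0 : (0 : ℤ) < p := by exact_mod_cast hp.pos
  obtain ⟨t1, h1⟩ := red_surj p t
  obtain ⟨q, hq⟩ := eis_round p hp0 t1
  set t0 := t1 - ((p : ℤ) : Eis ℤ) * q with ht0
  have h0 : red p t0 = t := by
    have := (red_eq_zero p (p * q)).2 ⟨q, rfl⟩
    rw [ht0, map_sub, h1]; simp [this]
  have hw0 : Lt p t (t0, 1) := by simp [Lt, h0]
  have hex : ∃ n : ℕ, ∃ g, Lt p t g ∧ 0 < pn g ∧ pn g = n :=
    ⟨(pn (t0, 1)).toNat, (t0, 1), hw0, by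
      have := eis_norm_nonneg t0
      simp [pn]; omega, by rw [Int.toNat_of_nonneg (pn_nonneg _)]⟩
  classical
  obtain ⟨g, hg, hgpos, hgn⟩ := Nat.find_spec hex
  have hmin : ∀ v, Lt p t v → pn v < pn g → v = 0 := by
    intro v hv hlt
    by_contra hne
    have hv0 : 0 < pn v := lt_of_le_of_ne (pn_nonneg v) (fun h => hne (pn_eq_zero v h.symm))
    have h2 : (pn v).toNat < Nat.find hex := by omega
    exact Nat.find_min hex h2 ⟨v, hv, hv0, by omega⟩
  have hgen : ∀ w, Lt p t w → ∃ q, w = qm q g := by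
    intro w hw
    obtain ⟨q, hq⟩ := qm_div w g hgpos
    exact ⟨q, sub_eq_zero.1 (hmin _ (Lt_sub p hw (Lt_qm p ht hg q)) hq)⟩
  refine ⟨g, ?_, hg, hgen⟩
  have hpp : Lt p t ((p : Eis ℤ), 0) := by
    have := (red_eq_zero p (p : Eis ℤ)).2 ⟨1, by ring⟩
    unfold Lt; rw [this, map_zero, mul_zero]
  obtain ⟨q1, hq1⟩ := hgen _ hpp
  obtain ⟨q2, hq2⟩ := hgen _ hw0
  have e1 : (p : ℤ) ^ 2 = pn q1 * pn g := by
    rw [← pn_qm, ← hq1]; simp [pn]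
  have e2 : t0.norm + 1 = pn q2 * pn g := by
    rw [← pn_qm, ← hq2]; simp [pn]
  have hd : (p : ℤ) ∣ pn g := Lt_dvd p ht hg
  have hlt : pn g < (p : ℤ) ^ 2 := by
    have h2 : (2 : ℤ) ≤ p := by exact_mod_cast hp.two_le
    have h3 := eis_norm_nonneg t0
    have : 0 < pn q2 := by
      rcases (pn_nonneg q2).lt_or_eq with h | h
      · exact h
      · rw [← h] at e2; linarith
    nlinarith
  have hd2 : (pn g).toNat ∣ p ^ 2 := by
    have : pn g ∣ (p : ℤ) ^ 2 := ⟨pn q1, by rw [e1]; ring⟩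
    have h4 := Int.natAbs_dvd_natAbs.2 this
    rw [Int.natAbs_pow, Int.natAbs_natCast] at h4
    convert h4 using 1
    omega
  obtain ⟨k, hk, hk2⟩ := (Nat.dvd_prime_pow hp).1 hd2
  have hk3 : pn g = (p : ℤ) ^ k := by
    have : pn g = ((pn g).toNat : ℤ) := by omega
    rw [this, hk2]; push_cast; rfl
  interval_cases k
  · rw [hk3] at hd
    have : p ∣ 1 := by exact_mod_cast hd
    exact absurd (Nat.dvd_one.1 this) hp.one_lt.ne'
  · simpa using hk3
  · omega

end P

theorem pn_finite (m : ℤ) : {w | pn w = m}.Finite := by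
  have hb : ∀ z : Eis ℤ, z.norm ≤ m → z ∈ (fun q : ℤ × ℤ => (⟨q.1, q.2⟩ : Eis ℤ)) ''
      (Set.Icc (-2 * |m|-2) (2 * |m| + 2) ×ˢ Set.Icc (-2 * |m|-2) (2 * |m| + 2)) := by
    intro z hz
    refine ⟨(z.re, z.im), ?_, rfl⟩
    rw [eis_norm] at hz
    have h1 : z.re ^ 2 ≤ 2 * |m| := by
      nlinarith [le_abs_self m, sq_nonneg (z.re - 2 * z.im), sq_nonneg z.re, sq_nonneg z.im]
    have h2 : z.im ^ 2 ≤ 2 * |m| := by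
      nlinarith [le_abs_self m, sq_nonneg (z.im - 2 * z.re), sq_nonneg z.re, sq_nonneg z.im]
    simp only [Set.mem_prod, Set.mem_Icc]
    refine ⟨⟨?_, ?_⟩, ?_, ?_⟩ <;> nlinarith [abs_nonneg m]
  have hf : ((fun q : ℤ × ℤ => (⟨q.1, q.2⟩ : Eis ℤ)) ''
      (Set.Icc (-2 * |m|-2) (2 * |m| + 2) ×ˢ Set.Icc (-2 * |m|-2) (2 * |m| + 2))).Finite :=
    ((Set.finite_Icc _ _).prod (Set.finite_Icc _ _)).image _
  refine Set.Finite.subset (hf.prod hf) ?_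
  · intro w hw
    have hw : w.1.norm + w.2.norm = m := hw
    have h1 := eis_norm_nonneg w.1
    have h2 := eis_norm_nonneg w.2
    exact ⟨hb _ (by linarith), hb _ (by linarith)⟩

noncomputable def rr (m : ℤ) : ℕ := Nat.card {w // pn w = m}

theorem fact_irr (p : ℕ) [hp : Fact p.Prime] (h3 : p % 3 = 2) :
    Fact (∀ r : ZMod p, r ^ 2 ≠ -1 + -1 * r) := by
  constructor
  intro r hr
  have h1 : r ^ 3 = 1 := by linear_combination (r - 1) * hr
  have h0 : r ≠ 0 := by rintro rfl; simp at hr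
  have h2 := ZMod.pow_card_sub_one_eq_one h0
  obtain ⟨q, hq⟩ : ∃ q, p - 1 = 3 * q + 1 := ⟨p / 3, by omega⟩
  rw [hq, pow_succ, pow_mul, h1, one_pow, one_mul] at h2
  subst h2
  have : ((3 : ℕ) : ZMod p) = 0 := by push_cast; linear_combination hr
  rw [ZMod.natCast_eq_zero_iff] at this
  have := (Nat.prime_dvd_prime_iff_eq hp.out Nat.prime_three).1 this
  omega

theorem eis_frob (p : ℕ) [hp : Fact p.Prime] (h3 : p % 3 = 2) (z : Eis (ZMod p)) :
    z ^ p = star z := by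
  haveI : CharP (Eis (ZMod p)) p := charP_of_injective_algebraMap
    (algebraMap_injective (R := ZMod p)) p
  have hz : z = algebraMap _ _ z.re + algebraMap _ _ z.im * omega := by
    ext <;> simp
  have ho : (omega : Eis (ZMod p)) ^ 3 = 1 := by
    ext <;> simp [pow_succ]
  have hop : (omega : Eis (ZMod p)) ^ p = star omega := by
    obtain ⟨q, hq⟩ : ∃ q, p = 3 * q + 2 := ⟨p / 3, by omega⟩
    rw [show (omega : Eis (ZMod p)) ^ p = omega ^ (3 * q + 2) from congrArg _ hq,
      pow_add, pow_mul, ho, one_pow, one_mul]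
    ext <;> simp [pow_succ]
  conv_lhs => rw [hz]
  rw [add_pow_char, mul_pow, hop, ← map_pow, ← map_pow, ZMod.pow_card, ZMod.pow_card]
  ext <;> simp

instance (p : ℕ) [NeZero p] : Fintype (Eis (ZMod p)) := Fintype.ofEquiv _ (equivProd _ _).symm

theorem card_eis (p : ℕ) [NeZero p] : Fintype.card (Eis (ZMod p)) = p ^ 2 := by
  rw [Fintype.card_congr (equivProd _ _)]; simp [ZMod.card, sq]

open Classical in
theorem card_T (p : ℕ) [hp : Fact p.Prime] (h3 : p % 3 = 2) (c : ZMod p) (hc : c ≠ 0) :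
    (Finset.univ.filter (fun t : Eis (ZMod p) => t.norm = c)).card = p + 1 := by
  have := fact_irr p h3
  have hp2 := hp.out.two_le
  have hle : ∀ c : ZMod p, (Finset.univ.filter (fun t : Eis (ZMod p) => t.norm = c)).card ≤ p + 1 := by
    intro c
    let P : Polynomial (Eis (ZMod p)) := Polynomial.X ^ (p + 1) - Polynomial.C (algebraMap _ _ c)
    have hP : P ≠ 0 := Polynomial.X_pow_sub_C_ne_zero (by omega) _
    calc _ ≤ P.roots.toFinset.card := by
          apply Finset.card_le_card
          intro t ht
          simp only [Finset.mem_filter, Finset.mem_univ, true_and] at ht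
          rw [Multiset.mem_toFinset, Polynomial.mem_roots hP]
          simp only [P, Polynomial.IsRoot, Polynomial.eval_sub, Polynomial.eval_pow,
            Polynomial.eval_X, Polynomial.eval_C]
          rw [pow_succ, eis_frob p h3, ← ht, algebraMap_norm_eq_mul_star]; ring
      _ ≤ Multiset.card P.roots := Multiset.toFinset_card_le _
      _ ≤ P.natDegree := Polynomial.card_roots' _
      _ = p + 1 := Polynomial.natDegree_X_pow_sub_C
  have hsum : ∑ c : ZMod p, (Finset.univ.filter (fun t : Eis (ZMod p) => t.norm = c)).card = p ^ 2 := by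
    rw [← card_eis p, ← Finset.card_univ]
    exact (Finset.card_eq_sum_card_fiberwise (fun x _ => Finset.mem_univ _)).symm
  have hz : (Finset.univ.filter (fun t : Eis (ZMod p) => t.norm = 0)).card = 1 := by
    rw [Finset.card_eq_one]
    refine ⟨0, ?_⟩
    ext t; simp [norm_eq_zero_iff_eq_zero]
  rw [← Finset.add_sum_erase _ _ (Finset.mem_univ (0 : ZMod p)), hz] at hsum
  by_contra hne
  have hlt := lt_of_le_of_ne (hle c) hne
  have : ∑ c ∈ Finset.univ.erase (0 : ZMod p), (Finset.univ.filter (fun t : Eis (ZMod p) => t.norm = c)).card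
      < ∑ c ∈ Finset.univ.erase (0 : ZMod p), (p + 1) :=
    Finset.sum_lt_sum (fun i _ => hle i) ⟨c, by simp [hc], hlt⟩
  rw [Finset.sum_const, Finset.card_erase_of_mem (Finset.mem_univ _), Finset.card_univ, ZMod.card, smul_eq_mul] at this
  obtain ⟨q, rfl⟩ : ∃ q, p = q + 1 := ⟨p - 1, by omega⟩
  simp at this
  nlinarith

theorem qm_inj (g) (hg : 0 < pn g) {v w} (h : qm v g = qm w g) : v = w := by
  have : qm (v - w) g = 0 := by
    have : qm (v - w) g = qm v g - qm w g := by
      unfold qm; ext1 <;> simp <;> ring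
    rw [this, h, sub_self]
  have h2 := pn_qm (v - w) g
  rw [this] at h2
  have h3 : pn (v - w) = 0 := by
    have : pn 0 = 0 := by simp [pn]
    rw [this] at h2
    rcases mul_eq_zero.1 h2.symm with h | h
    · exact h
    · omega
  exact sub_eq_zero.1 (pn_eq_zero _ h3)

theorem card_Lt (p : ℕ) (hp : p.Prime) (t : Eis (ZMod p)) (ht : t.norm = -1) (m : ℤ) :
    Nat.card {w // pn w = p * m ∧ Lt p t w} = rr m := by
  obtain ⟨g, hg, hgt, hgen⟩ := exists_gen p hp t ht
  have hp0 : (0 : ℤ) < p := by exact_mod_cast hp.pos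
  symm
  refine Nat.card_congr (Equiv.ofBijective
    (fun v : {w // pn w = m} => ⟨qm v.1 g, by rw [pn_qm, v.2, hg, mul_comm], Lt_qm p ht hgt _⟩) ⟨?_, ?_⟩)
  · intro v w h
    exact Subtype.ext (qm_inj g (by omega) (congrArg Subtype.val h))
  · rintro ⟨w, h1, h2⟩
    obtain ⟨q, rfl⟩ := hgen w h2
    refine ⟨⟨q, ?_⟩, rfl⟩
    rw [pn_qm, hg, mul_comm] at h1
    exact mul_left_cancel₀ hp0.ne' h1

open Classical in
theorem hecke (p : ℕ) (hp : p.Prime) (h3 : p % 3 = 2) (m : ℤ) :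
    (p + 1) * rr m = rr (p * m) + p * Nat.card {v // p * pn v = m} := by
  have : Fact p.Prime := ⟨hp⟩
  have := fact_irr p h3
  have hp0 : (0 : ℤ) < p := by exact_mod_cast hp.pos
  let W := (pn_finite (p * m)).toFinset
  have hW : ∀ w, w ∈ W ↔ pn w = p * m := fun w => by simp [W]
  let T := Finset.univ.filter (fun t : Eis (ZMod p) => t.norm = -1)
  have hT : T.card = p + 1 := card_T p h3 _ (by simp)
  have hcW : W.card = rr (p * m) := by
    rw [rr, Nat.subtype_card W hW]
  have hd := Finset.sum_card_bipartiteAbove_eq_sum_card_bipartiteBelow (s := T) (t := W) (fun t w => Lt p t w)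
  have hl : ∀ t ∈ T, (W.bipartiteAbove (fun t w => Lt p t w) t).card = rr m := by
    intro t ht
    rw [← card_Lt p hp t (by simpa [T] using ht) m]
    symm
    apply Nat.subtype_card
    intro w
    simp [Finset.bipartiteAbove, hW]
  rw [Finset.sum_congr rfl hl, Finset.sum_const, hT, smul_eq_mul] at hd
  rw [hd]
  let Z := W.filter (fun w => red p w.1 = 0 ∧ red p w.2 = 0)
  have hr : ∀ w ∈ W, (T.bipartiteBelow (fun t w => Lt p t w) w).card =
      1 + if red p w.1 = 0 ∧ red p w.2 = 0 then p else 0 := by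
    intro w hw
    split_ifs with h
    · rw [add_comm, ← hT]
      congr 1
      ext t; simp [Finset.bipartiteBelow, Lt, h.1, h.2]
    · rw [Finset.card_eq_one]
      have h0 : (red p w.1).norm + (red p w.2).norm = 0 := by
        rw [red_norm, red_norm, ← Int.cast_add, ZMod.intCast_zmod_eq_zero_iff_dvd]
        exact ⟨m, (hW w).1 hw⟩
      have h2 : red p w.2 ≠ 0 := by
        intro h2
        rw [h2, QuadraticAlgebra.norm_zero, add_zero, norm_eq_zero_iff_eq_zero] at h0
        exact h ⟨h0, h2⟩
      have hn2 : (red p w.2).norm ≠ 0 := fun h => h2 (norm_eq_zero_iff_eq_zero.1 h)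
      refine ⟨red p w.1 / red p w.2, ?_⟩
      ext t
      rw [Finset.mem_bipartiteBelow, Finset.mem_filter, Finset.mem_singleton]
      simp only [Finset.mem_univ, true_and, Lt]
      rw [eq_div_iff h2]
      constructor
      · rintro ⟨_, h⟩; exact h.symm
      · intro h
        refine ⟨?_, h.symm⟩
        rw [← h, map_mul] at h0
        have : (t.norm + 1) * (red p w.2).norm = 0 := by linear_combination h0
        rcases mul_eq_zero.1 this with h | h
        · exact eq_neg_of_add_eq_zero_left h
        · exact absurd h hn2
  rw [Finset.sum_congr rfl hr, Finset.sum_add_distrib, Finset.sum_const, smul_eq_mul, mul_one, hcW,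
    ← Finset.sum_filter, Finset.sum_const, smul_eq_mul, mul_comm _ p]
  congr 2
  rw [← Nat.subtype_card (p := fun w => pn w = p * m ∧ red p w.1 = 0 ∧ red p w.2 = 0) _ (by intro w; simp [hW])]
  symm
  have hpn : ∀ v : Eis ℤ × Eis ℤ, pn (p * v.1, p * v.2) = p ^ 2 * pn v := by
    intro v; simp [pn]; ring
  refine Nat.card_congr (Equiv.ofBijective
    (fun v : {v // p * pn v = m} => ⟨(p * v.1.1, p * v.1.2), by rw [hpn]; linear_combination (p : ℤ) * v.2,
      (red_eq_zero _ _).2 ⟨_, rfl⟩, (red_eq_zero _ _).2 ⟨_, rfl⟩⟩) ⟨?_, ?_⟩)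
  · rintro ⟨v, _⟩ ⟨w, _⟩ h
    simp only [Subtype.mk.injEq, Prod.mk.injEq, QuadraticAlgebra.ext_iff, re_mul, im_mul, re_natCast, im_natCast] at h
    apply Subtype.ext
    simp at h
    ext <;> simp_all [hp.ne_zero]
  · rintro ⟨⟨w1, w2⟩, h0, h1, h2⟩
    obtain ⟨y1, rfl⟩ := (red_eq_zero _ _).1 h1
    obtain ⟨y2, rfl⟩ := (red_eq_zero _ _).1 h2
    refine ⟨⟨(y1, y2), ?_⟩, rfl⟩
    have := hpn (y1, y2)
    simp only at this
    rw [this, sq, mul_assoc] at h0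
    exact mul_left_cancel₀ hp0.ne' h0

theorem rr_p (p : ℕ) (hp : p.Prime) (h3 : p % 3 = 2) (m : ℤ) (hm : ¬ (p : ℤ) ∣ m) :
    rr (p * m) = (p + 1) * rr m := by
  rw [hecke p hp h3]
  have : IsEmpty {v // p * pn v = m} := ⟨fun v => hm ⟨_, v.2.symm⟩⟩
  simp

theorem rr_pp (p : ℕ) (hp : p.Prime) (h3 : p % 3 = 2) (m : ℤ) :
    rr (p * (p * m)) + p * rr m = (p + 1) * rr (p * m) := by
  rw [hecke p hp h3 (p * m)]
  have hp0 : (p : ℤ) ≠ 0 := by exact_mod_cast hp.ne_zero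
  congr 2
  unfold rr
  congr 1
  have : p ≠ 0 := hp.ne_zero
  simp [this]

theorem rr_pow (p : ℕ) (hp : p.Prime) (h3 : p % 3 = 2) (m : ℤ) (hm : ¬ (p : ℤ) ∣ m) (k : ℕ) :
    ((p : ℤ) - 1) * rr (p ^ k * m) = (p ^ (k + 1) - 1) * rr m ∧
    ((p : ℤ) - 1) * rr (p ^ (k + 1) * m) = (p ^ (k + 2) - 1) * rr m := by
  induction k with
  | zero =>
    refine ⟨by simp, ?_⟩
    have := rr_p p hp h3 m hm
    simp only [zero_add, pow_one, this]; push_cast; ring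
  | succ k ih =>
    refine ⟨ih.2, ?_⟩
    have := rr_pp p hp h3 (p ^ k * m)
    rw [← mul_assoc, ← mul_assoc, ← mul_assoc] at this
    rw [show (p : ℤ) * p * p ^ k * m = p ^ (k + 1 + 1) * m by ring,
      show (p : ℤ) * p ^ k * m = p ^ (k + 1) * m by ring] at this
    have h := congrArg (Nat.cast : ℕ → ℤ) this
    push_cast at h
    linear_combination ((p : ℤ) - 1) * h + (p + 1) * ih.2 - p * ih.1

def CC (u : Eis ℤ) : Prop := u.re % 3 = 1 ∧ u.im % 3 = 0

theorem exists_core (u : Eis ℤ) (hu : CC u) : ∃ μ : YoungDiagram, μ.IsThreeCore ∧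
    (3 * (μ.card : ℤ) + 1 = u.norm) ∧
    ∀ z, InS μ z ↔ S3 (u.im / 3 - (u.re - 1) / 3) (-(u.im / 3)) ((u.re - 1) / 3) z := by
  obtain ⟨h1, h2⟩ := hu
  obtain ⟨μ, hμ⟩ := exists_S3 (u.im / 3 - (u.re - 1) / 3) (-(u.im / 3)) ((u.re - 1) / 3) (by ring)
  refine ⟨μ, S3_core μ _ _ _ hμ, ?_, hμ⟩
  have h := (S3_sum μ _ _ _ hμ).2
  obtain ⟨x, hx⟩ : ∃ x, u.re = 3 * x + 1 := ⟨u.re / 3, by omega⟩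
  obtain ⟨y, hy⟩ : ∃ y, u.im = 3 * y := ⟨u.im / 3, by omega⟩
  have e1 : (u.re - 1) / 3 = x := by omega
  have e2 : u.im / 3 = y := by omega
  rw [e1, e2] at h
  rw [eis_norm, hx, hy]
  linarith

noncomputable def toCore (u : {u : Eis ℤ // CC u}) : YoungDiagram := (exists_core u.1 u.2).choose

theorem toCore_spec (u : {u : Eis ℤ // CC u}) : (toCore u).IsThreeCore ∧
    (3 * ((toCore u).card : ℤ) + 1 = u.1.norm) ∧
    ∀ z, InS (toCore u) z ↔ S3 (u.1.im / 3 - (u.1.re - 1) / 3) (-(u.1.im / 3)) ((u.1.re - 1) / 3) z :=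
  (exists_core u.1 u.2).choose_spec

theorem S3_inj {a b c a' b' c' : ℤ} (h : ∀ z, S3 a b c z ↔ S3 a' b' c' z) :
    a = a' ∧ b = b' ∧ c = c' := by
  have h1 := h (3 * a)
  have h2 := h (3 * a')
  have h3 := h (3 * b + 1)
  have h4 := h (3 * b' + 1)
  have h5 := h (3 * c + 2)
  have h6 := h (3 * c' + 2)
  unfold S3 at *
  clear h
  refine ⟨?_, ?_, ?_⟩
  · clear h3 h4 h5 h6; omega
  · clear h1 h2 h5 h6; omega
  · clear h1 h2 h3 h4; omega

theorem toCore_inj : Function.Injective toCore := by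
  rintro u v h
  have h1 := (toCore_spec u).2.2
  have h2 := (toCore_spec v).2.2
  rw [h] at h1
  obtain ⟨_, h4, h5⟩ := S3_inj (fun z => (h1 z).symm.trans (h2 z))
  obtain ⟨u, hu1, hu2⟩ := u
  obtain ⟨v, hv1, hv2⟩ := v
  simp only at h4 h5
  apply Subtype.ext
  ext <;> simp only <;> omega

theorem toCore_surj (μ : YoungDiagram) (h : μ.IsThreeCore) : ∃ u, toCore u = μ := by
  obtain ⟨a, b, c, hS⟩ := core_S3 μ h
  have hs := (S3_sum μ a b c hS).1
  refine ⟨⟨⟨3 * c + 1, -3 * b⟩, by constructor <;> simp only <;> omega⟩, ?_⟩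
  apply InS_inj
  intro z
  rw [hS, (toCore_spec _).2.2]
  simp only
  rw [show (3 * c + 1 - 1) / 3 = c by omega, show (-3 * b) / 3 = -b by omega,
    show -b - c = a by omega, neg_neg]

theorem A3_eq (n : ℕ) : A3 n =
    Nat.card {w : Eis ℤ × Eis ℤ // pn w = 3 * n + 2 ∧ CC w.1 ∧ CC w.2} := by
  unfold A3
  symm
  refine Nat.card_congr (Equiv.ofBijective
    (fun w => ⟨(toCore ⟨w.1.1, w.2.2.1⟩, toCore ⟨w.1.2, w.2.2.2⟩), ?_,
      (toCore_spec _).1, (toCore_spec _).1⟩) ⟨?_, ?_⟩)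
  · have h1 := (toCore_spec ⟨w.1.1, w.2.2.1⟩).2.1
    have h2 := (toCore_spec ⟨w.1.2, w.2.2.2⟩).2.1
    have h3 := w.2.1
    unfold pn at h3
    simp only at h1 h2 ⊢
    omega
  · rintro ⟨⟨u, v⟩, h1, h2, h3⟩ ⟨⟨u', v'⟩, h1', h2', h3'⟩ h
    simp only [Subtype.mk.injEq, Prod.mk.injEq] at h
    have e1 := toCore_inj h.1
    have e2 := toCore_inj h.2
    simp only [Subtype.mk.injEq] at e1 e2
    simp [e1, e2]
  · rintro ⟨⟨μ, ν⟩, h1, h2, h3⟩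
    obtain ⟨u, rfl⟩ := toCore_surj μ h2
    obtain ⟨v, rfl⟩ := toCore_surj ν h3
    refine ⟨⟨(u.1, v.1), ?_, u.2, v.2⟩, rfl⟩
    have e1 := (toCore_spec u).2.1
    have e2 := (toCore_spec v).2.1
    simp only at h1
    unfold pn
    simp only
    omega

def eu : Fin 6 → Eis ℤ := ![⟨1, 0⟩, ⟨-1, 0⟩, ⟨0, 1⟩, ⟨0, -1⟩, ⟨1, 1⟩, ⟨-1, -1⟩]

theorem eu_norm (i : Fin 6) : (eu i).norm = 1 := by
  fin_cases i <;> simp [eu, eis_norm]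

theorem eu_inj (i j : Fin 6) (c d : Eis ℤ) (hc : CC c) (hd : CC d) (h : eu i * c = eu j * d) :
    i = j ∧ c = d := by
  obtain ⟨c1, c2⟩ := c
  obtain ⟨d1, d2⟩ := d
  obtain ⟨h1, h2⟩ := hc
  obtain ⟨h3, h4⟩ := hd
  rw [QuadraticAlgebra.ext_iff] at h
  simp only [re_mul, im_mul, QuadraticAlgebra.mk.injEq] at *
  fin_cases i <;> fin_cases j <;> simp [eu] at h ⊢ <;> omega

theorem eu_surj (u : Eis ℤ) (h : u.norm % 3 = 1) : ∃ i c, CC c ∧ eu i * c = u := by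
  obtain ⟨x, y⟩ := u
  rw [eis_norm] at h
  simp only at h
  have hx : x % 3 = 0 ∨ x % 3 = 1 ∨ x % 3 = 2 := by omega
  have hy : y % 3 = 0 ∨ y % 3 = 1 ∨ y % 3 = 2 := by omega
  have hh : (x + y) % 3 ≠ 0 := by
    intro h0
    obtain ⟨k, hk⟩ : ∃ k, x = 3 * k - y := ⟨(x + y) / 3, by omega⟩
    subst hk
    have : (3 * k - y) ^ 2 - (3 * k - y) * y + y ^ 2 = 3 * (3 * k ^ 2 - 3 * k * y + y ^ 2) := by ring
    omega
  have fin : ∀ i c, CC c → eu i * c = ⟨x, y⟩ → ∃ i c, CC c ∧ eu i * c = ⟨x, y⟩ :=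
    fun i c h1 h2 => ⟨i, c, h1, h2⟩
  rcases hx with hx | hx | hx <;> rcases hy with hy | hy | hy
  · omega
  · refine fin 2 ⟨y - x, -x⟩ ⟨?_, ?_⟩ ?_
    · simp only; omega
    · simp only; omega
    · ext <;> simp [eu]
  · refine fin 3 ⟨x - y, x⟩ ⟨?_, ?_⟩ ?_
    · simp only; omega
    · simp only; omega
    · ext <;> simp [eu]
  · refine fin 0 ⟨x, y⟩ ⟨?_, ?_⟩ ?_
    · simp only; omega
    · simp only; omega
    · ext <;> simp [eu]
  · refine fin 4 ⟨y, y - x⟩ ⟨?_, ?_⟩ ?_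
    · simp only; omega
    · simp only; omega
    · ext <;> simp [eu]
  · omega
  · refine fin 1 ⟨-x, -y⟩ ⟨?_, ?_⟩ ?_
    · simp only; omega
    · simp only; omega
    · ext <;> simp [eu]
  · omega
  · refine fin 5 ⟨-y, x - y⟩ ⟨?_, ?_⟩ ?_
    · simp only; omega
    · simp only; omega
    · ext <;> simp [eu]

theorem norm_mod (u : Eis ℤ) : u.norm % 3 = 0 ∨ u.norm % 3 = 1 := by
  rw [eis_norm, show u.re ^ 2 - u.re * u.im + u.im ^ 2 =
    (u.re + u.im) ^ 2 - 3 * (u.re * u.im) by ring]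
  obtain ⟨k, hk⟩ : ∃ k, u.re + u.im = 3 * k ∨ u.re + u.im = 3 * k + 1 ∨ u.re + u.im = 3 * k - 1 :=
    ⟨(u.re + u.im + 1) / 3, by omega⟩
  rcases hk with hk | hk | hk <;> rw [hk]
  · have : (3 * k) ^ 2 = 3 * (3 * k ^ 2) := by ring
    omega
  · have : (3 * k + 1) ^ 2 = 3 * (3 * k ^ 2 + 2 * k) + 1 := by ring
    omega
  · have : (3 * k - 1) ^ 2 = 3 * (3 * k ^ 2 - 2 * k) + 1 := by ring
    omega

theorem rr_A3 (n : ℕ) : rr (3 * n + 2) = 36 * A3 n := by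
  rw [A3_eq]
  have : 36 = Nat.card (Fin 6 × Fin 6) := by simp
  rw [this, ← Nat.card_prod]
  symm
  unfold rr
  refine Nat.card_congr (Equiv.ofBijective
    (fun q => ⟨(eu q.1.1 * q.2.1.1, eu q.1.2 * q.2.1.2), ?_⟩) ⟨?_, ?_⟩)
  · have := q.2.2.1
    unfold pn at *
    simpa only [map_mul, eu_norm, one_mul] using this
  · rintro ⟨⟨i, j⟩, ⟨u, v⟩, h1, h2, h3⟩ ⟨⟨i', j'⟩, ⟨u', v'⟩, h1', h2', h3'⟩ h
    simp only [Subtype.mk.injEq, Prod.mk.injEq] at h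
    obtain ⟨a1, a2⟩ := eu_inj _ _ _ _ h2 h2' h.1
    obtain ⟨a3, a4⟩ := eu_inj _ _ _ _ h3 h3' h.2
    simp only at a2 a4
    simp [a1, a2, a3, a4]
  · rintro ⟨⟨u, v⟩, h⟩
    have h' : u.norm + v.norm = 3 * n + 2 := h
    have m1 := norm_mod u
    have m2 := norm_mod v
    obtain ⟨i, c, hc, rfl⟩ := eu_surj u (by omega)
    obtain ⟨j, d, hd, rfl⟩ := eu_surj v (by omega)
    refine ⟨⟨(i, j), ⟨(c, d), ?_, hc, hd⟩⟩, rfl⟩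
    simpa only [pn, map_mul, eu_norm, one_mul] using h'

end EisPart

/-- For a prime p ≡ 2 (mod 3) with p ∤ 3n+2:
(p−1)·A₃(p²ᵏn + (2p²ᵏ−2)/3) = (p^{2k+1}−1)·A₃(n). -/
theorem A3_mult_two_mod_three (p k n : ℕ) (hp : p.Prime) (hp3 : p % 3 = 2)
    (hpn : ¬ p ∣ 3 * n + 2) :
    (p - 1) * A3 (p ^ (2 * k) * n + (2 * p ^ (2 * k) - 2) / 3) =
      (p ^ (2 * k + 1) - 1) * A3 n := by
  have hm : ¬ (p : ℤ) ∣ 3 * n + 2 := by exact_mod_cast hpn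
  have h := (rr_pow p hp hp3 _ hm (2 * k)).1
  have hmod : p ^ (2 * k) % 3 = 1 := by
    rw [pow_mul, Nat.pow_mod, Nat.pow_mod p 2, hp3]; simp
  have e : ((p : ℤ) ^ (2 * k) * (3 * n + 2)) =
      3 * ((p ^ (2 * k) * n + (2 * p ^ (2 * k) - 2) / 3 : ℕ) : ℤ) + 2 := by
    have : 3 * ((2 * p ^ (2 * k) - 2) / 3) + 2 = 2 * p ^ (2 * k) := by omega
    have h2 : (3 * (((2 * p ^ (2 * k) - 2) / 3 : ℕ) : ℤ) + 2) = 2 * (p : ℤ) ^ (2 * k) := by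
      exact_mod_cast this
    rw [Nat.cast_add, Nat.cast_mul, Nat.cast_pow]
    linear_combination -h2
  rw [e, rr_A3, rr_A3] at h
  have hp1 : 1 ≤ p := hp.one_lt.le
  have hp2 : 1 ≤ p ^ (2 * k + 1) := Nat.one_le_pow _ _ hp.pos
  zify [hp1, hp2]
  rw [Nat.cast_mul, Nat.cast_mul] at h
  have h36 : ((36 : ℕ) : ℤ) ≠ 0 := by norm_num
  apply mul_left_cancel₀ h36
  push_cast at h ⊢
  linear_combination h
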